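/- Let r ≥ 2 and m ≥ 1 be integers. Let H be a collection of n pairwise disjoint r-element subsets of ℤ. If for every r-pattern P every P-clique contained in H has size at most m, then n ≤ 2^{r−1}·(r−1)!·m^{2^r−1}. -/

import Mathlib

/-- A block `A^k B^k` (if `b = true`) or `B^k A^k` (if `b = false`), where `true` encodes
the letter A and `false` encodes the letter B. -/
def pblock (k : ℕ) (b : Bool) : List Bool :=
  if b then List.replicate k true ++ List.replicate k false
  else List.replicate k false ++ List.replicate k true

/-- An `r`-pattern: a string in `{A,B}^{2r}` starting with A, with `r` A's and `r` B's.
Here `true` encodes A and `false` encodes B. -/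
def IsPattern (r : ℕ) (P : List Bool) : Prop :=
  P.length = 2 * r ∧ P.count true = r ∧ P.head? = some true

/-- The pattern determined by the pair of disjoint finite sets `(e, f)`: list the elements of
`e ∪ f` in increasing order and record membership in `e` (A = `true`) vs `f` (B = `false`). -/
def patternOfPair (e f : Finset ℤ) : List Bool :=
  ((e ∪ f).sort (· ≤ ·)).map (fun x => decide (x ∈ e))

/-- The unordered pair `{e, f}` realizes the pattern `P`. -/
def Realizes (P : List Bool) (e f : Finset ℤ) : Prop :=
  patternOfPair e f = P ∨ patternOfPair f e = P

/-- A collection `S` is a `P`-clique if every pair of distinct members realizes the pattern `P`. -/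
def IsPClique (P : List Bool) (S : Finset (Finset ℤ)) : Prop :=
  ∀ e ∈ S, ∀ f ∈ S, e ≠ f → Realizes P e f

/-
The sequence enumerating a set is cut into blocks by a set `C` of its gaps, each containing a
value `x c` shared by the whole family, so that the relative order of entries in distinct blocks
is the same for all pairs. If moreover no `q` in the family has the first entry of one of its blocks
inside a new gap of the same block of some other `p`, then two members are comparable block by
block; their comparison is one of `2 ^ #C` strict orders (which blocks are reversed, up to swapping
the two members), the chains of each are cliques, and Mirsky's theorem bounds the family by
`m ^ 2 ^ #C`. In general, a first entry of `q` serves as the value of a new gap for all the `p` that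
it splits, and induction bounds the number of these. The digraph of splitting pairs then has bounded
out-degree, so a greedily chosen independent set, to which the first case applies, makes up a
fixed fraction of the family.
-/

namespace OrderedMatching

open Finset

section Digraph

variable {α : Type*} {R : α → α → Prop} {S : Finset α} {d : ℕ}

open Classical in
theorem exists_card_filter_or_le (hS : S.Nonempty) (hd : ∀ a ∈ S, #{b ∈ S | R a b} ≤ d) :
    ∃ a ∈ S, #{b ∈ S | R a b ∨ R b a} ≤ 2 * d := by
  have out_eq_in : ∑ a ∈ S, #{b ∈ S | R a b} = ∑ a ∈ S, #{b ∈ S | R b a} :=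
    sum_card_bipartiteAbove_eq_sum_card_bipartiteBelow R
  have sum_le : ∑ a ∈ S, (#{b ∈ S | R a b} + #{b ∈ S | R b a}) ≤ ∑ _a ∈ S, 2 * d := by
    rw [sum_add_distrib, ← out_eq_in, ← two_mul, ← mul_sum]
    exact Nat.mul_le_mul_left 2 (sum_le_sum hd)
  obtain ⟨a, ha, hle⟩ := exists_le_of_sum_le hS sum_le
  exact ⟨a, ha, by rw [filter_or]; exact (card_union_le _ _).trans hle⟩

open Classical in
theorem exists_pairwise_not_card_le (hR : ∀ a ∈ S, R a a)
    (hd : ∀ a ∈ S, #{b ∈ S | R a b} ≤ d) :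
    ∃ T ⊆ S, (T : Set α).Pairwise (fun a b => ¬ R a b) ∧ #S ≤ 2 * d * #T := by
  induction S using Finset.strongInduction with
  | H S ih =>
    rcases S.eq_empty_or_nonempty with rfl | hS
    · exact ⟨∅, by simp⟩
    obtain ⟨a, ha, hNd⟩ := exists_card_filter_or_le hS hd
    set N := {b ∈ S | R a b ∨ R b a}
    have haN : a ∈ N := by simp [N, ha, hR a ha]
    have hNS : N ⊆ S := filter_subset _ _
    have hSN : S \ N ⊂ S := sdiff_ssubset hNS ⟨a, haN⟩
    obtain ⟨T, hTS, hT, hST⟩ := ih (S \ N) hSN (fun b hb => hR b (hSN.1 hb)) fun b hb =>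
      (card_le_card (filter_subset_filter _ hSN.1)).trans (hd b (hSN.1 hb))
    have not_adj : ∀ b ∈ T, ¬ R a b ∧ ¬ R b a := fun b hb => by
      have := mem_sdiff.1 (hTS hb)
      simpa [N, this.1] using this.2
    have haT : a ∉ T := fun h => (not_adj a h).1 (hR a ha)
    refine ⟨insert a T, insert_subset ha (hTS.trans hSN.1), ?_, ?_⟩
    · rw [coe_insert, Set.pairwise_insert_of_notMem (mod_cast haT)]
      exact ⟨hT, fun b hb => not_adj b hb⟩
    · have := card_sdiff_add_card_eq_card hNS
      rw [card_insert_of_notMem haT, mul_add]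
      omega

end Digraph

section Chains

variable {α ι : Type*} {m : ℕ} {T : Finset α}

theorem exists_height_of_chain_card_le {r : α → α → Prop} [IsStrictOrder α r]
    (hchain : ∀ Q ⊆ T, IsChain r (Q : Set α) → #Q ≤ m) :
    ∃ h : α → ℕ, (∀ a ∈ T, h a < m) ∧ ∀ a ∈ T, ∀ b ∈ T, r a b → h a < h b := by
  classical
  let chainsBelow (a : α) : Finset (Finset α) :=
    {Q ∈ ({b ∈ T | r b a} : Finset α).powerset | IsChain r (Q : Set α)}
  have mem_chainsBelow {a : α} {Q : Finset α} : Q ∈ chainsBelow a ↔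
      (∀ b ∈ Q, b ∈ T ∧ r b a) ∧ IsChain r (Q : Set α) := by
    simp [chainsBelow, subset_iff]
  have card_insert_of_mem {a : α} {Q : Finset α} (hQ : Q ∈ chainsBelow a) :
      IsChain r (insert a Q : Set α) ∧ #(insert a Q) = #Q + 1 := by
    obtain ⟨hQa, hQ⟩ := mem_chainsBelow.1 hQ
    exact ⟨hQ.insert fun b hb _ => .inr (hQa b hb).2,
      card_insert_of_notMem fun ha => irrefl_of r a (hQa a ha).2⟩
  let height (a : α) : ℕ := (chainsBelow a).sup card
  have exists_max (a : α) : ∃ Q ∈ chainsBelow a, height a = #Q :=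
    exists_mem_eq_sup _ ⟨∅, mem_chainsBelow.2 (by simp)⟩ _
  refine ⟨height, fun a ha => ?_, fun a ha b _ hab => ?_⟩
  · obtain ⟨Q, hQ, hmax⟩ := exists_max a
    obtain ⟨hins, hcard⟩ := card_insert_of_mem hQ
    have hQT : Q ⊆ T := fun b hb => ((mem_chainsBelow.1 hQ).1 b hb).1
    have := hchain (insert a Q) (insert_subset ha hQT) (by rwa [coe_insert])
    omega
  · obtain ⟨Q, hQ, hmax⟩ := exists_max a
    obtain ⟨hins, hcard⟩ := card_insert_of_mem hQ
    have hQb : insert a Q ∈ chainsBelow b := by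
      refine mem_chainsBelow.2 ⟨?_, by rwa [coe_insert]⟩
      have hQa := (mem_chainsBelow.1 hQ).1
      exact forall_mem_insert .. |>.2
        ⟨⟨ha, hab⟩, fun c hc => ⟨(hQa c hc).1, trans_of r (hQa c hc).2 hab⟩⟩
    have : #(insert a Q) ≤ height b := le_sup (f := card) hQb
    omega

theorem card_le_pow_of_chain_card_le {I : Finset ι} {lt : ι → α → α → Prop}
    [∀ i, IsStrictOrder α (lt i)]
    (hcomp : (T : Set α).Pairwise fun a b => ∃ i ∈ I, lt i a b ∨ lt i b a)
    (hchain : ∀ i ∈ I, ∀ Q ⊆ T, IsChain (lt i) (Q : Set α) → #Q ≤ m) :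
    #T ≤ m ^ #I := by
  classical
  choose! h hm hlt using fun i hi => exists_height_of_chain_card_le (hchain i hi)
  have hinj : Set.InjOn (fun a (i : I) => h i a) (T : Set α) := by
    intro a ha b hb hab
    by_contra hne
    obtain ⟨i, hi, hr⟩ := hcomp ha hb hne
    have heq : h i a = h i b := congrFun hab ⟨i, hi⟩
    rcases hr with hr | hr
    · exact (hlt i hi a ha b hb hr).ne heq
    · exact (hlt i hi b hb a ha hr).ne' heq
  calc #T ≤ #(Fintype.piFinset fun _ : I => range m) :=
        card_le_card_of_injOn _ (fun a ha => by simpa using fun i hi => hm i hi a ha) hinj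
    _ = m ^ #I := by simp

end Chains

section Blocks

variable {n : ℕ} {α : Type*} [LinearOrder α] {C σ : Finset (Fin n)} {i k : Fin (n + 1)}

/-- The first index of the block of `i`, when `0, …, n` is cut into blocks between `c` and `c + 1`
for each `c ∈ C`. -/
noncomputable def blockStart (C : Finset (Fin n)) (i : Fin (n + 1)) : Fin (n + 1) :=
  {c ∈ C | c.succ ≤ i}.sup Fin.succ

theorem blockStart_le : blockStart C i ≤ i :=
  Finset.sup_le fun _ hc => (mem_filter.1 hc).2

theorem succ_le_blockStart {c : Fin n} (hc : c ∈ C) (h : c.succ ≤ i) : c.succ ≤ blockStart C i :=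
  le_sup (f := Fin.succ) (mem_filter.2 ⟨hc, h⟩)

theorem blockStart_mono : Monotone (blockStart C) := fun _ _ h =>
  sup_mono fun _ hc => mem_filter.2 ⟨(mem_filter.1 hc).1, (mem_filter.1 hc).2.trans h⟩

theorem blockStart_eq_zero_or_succ (C : Finset (Fin n)) (i : Fin (n + 1)) :
    blockStart C i = 0 ∨ ∃ c ∈ C, blockStart C i = c.succ := by
  rcases eq_empty_or_nonempty {c ∈ C | c.succ ≤ i} with h | h
  · exact .inl (by rw [blockStart, h, sup_empty]; rfl)
  · obtain ⟨c, hc, hci⟩ := exists_mem_eq_sup _ h Fin.succ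
    exact .inr ⟨c, (mem_filter.1 hc).1, hci⟩

@[simp]
theorem blockStart_zero : blockStart C 0 = 0 :=
  le_antisymm blockStart_le (Fin.zero_le _)

@[simp]
theorem blockStart_blockStart : blockStart C (blockStart C i) = blockStart C i := by
  rcases blockStart_eq_zero_or_succ C i with h | ⟨c, hc, h⟩
  · rw [h, blockStart_zero]
  · exact le_antisymm blockStart_le (h ▸ succ_le_blockStart hc le_rfl)

theorem blockStart_succ_lt {c : Fin n} (hc : c ∉ C) : blockStart C c.succ < c.succ := by
  refine blockStart_le.lt_of_ne fun h => ?_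
  rcases blockStart_eq_zero_or_succ C c.succ with h0 | ⟨c', hc', h'⟩
  · exact Fin.succ_ne_zero c (h ▸ h0)
  · exact hc (Fin.succ_injective n (h ▸ h') ▸ hc')

/-- The values `y` that separate the entries `p 0, …, p c` from `p (c + 1), …, p n`, for a strictly
monotone `p`. The gap contains `p c` itself, so that every sequence meets its own gaps. -/
def gap (p : Fin (n + 1) → α) (c : Fin n) : Set α :=
  Set.Ico (p c.castSucc) (p c.succ)

theorem lt_of_blockStart_lt {p q : Fin (n + 1) → α} {x : Fin n → α} (hp : Monotone p)
    (hq : Monotone q) (hpx : ∀ c ∈ C, x c ∈ gap p c) (hqx : ∀ c ∈ C, x c ∈ gap q c)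
    (h : blockStart C i < blockStart C k) : p i < q k := by
  rcases blockStart_eq_zero_or_succ C k with hk | ⟨c, hc, hk⟩
  · exact absurd (hk ▸ h) (Fin.not_lt_zero _)
  have hic : i ≤ c.castSucc := by
    by_contra! hlt
    exact (succ_le_blockStart hc (Fin.castSucc_lt_iff_succ_le.1 hlt)).not_gt (hk ▸ h)
  calc p i ≤ p c.castSucc := hp hic
    _ ≤ x c := (hpx c hc).1
    _ < q c.succ := (hqx c hc).2
    _ ≤ q k := hq (hk ▸ blockStart_le)

theorem exists_mem_gap {p : Fin (n + 1) → α} {y : α} (hstart : p (blockStart C k) ≤ y)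
    (hk : y < p k) :
    ∃ c ∉ C, blockStart C c.castSucc = blockStart C k ∧ y ∈ gap p c := by
  obtain ⟨j, hj, hmax⟩ := exists_max_image {j | j ≤ k ∧ p j ≤ y} id
    ⟨blockStart C k, by simp [blockStart_le, hstart]⟩
  simp only [mem_filter, mem_univ, true_and, id, and_imp] at hj hmax
  have hjk : j < k := hj.1.lt_of_ne fun h => (h ▸ hj.2).not_gt hk
  have hstart_j : blockStart C k ≤ j := hmax _ blockStart_le hstart
  obtain ⟨c, rfl⟩ := Fin.exists_castSucc_eq.2 (hjk.trans_le (Fin.le_last k)).ne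
  have hck : c.succ ≤ k := Fin.castSucc_lt_iff_succ_le.1 hjk
  refine ⟨c, fun hc => ?_, le_antisymm (blockStart_mono hj.1) ?_, hj.2, ?_⟩
  · exact ((succ_le_blockStart hc hck).trans hstart_j).not_gt Fin.castSucc_lt_succ
  · simpa using blockStart_mono (C := C) hstart_j
  · by_contra! hle
    exact (hmax _ hck hle).not_gt Fin.castSucc_lt_succ

/-- `q` splits `p` if the first entry of some block of `q` lies in a gap of `p` interior to that
block. -/
def Splits (C : Finset (Fin n)) (q p : Fin (n + 1) → α) : Prop :=
  ∃ c ∉ C, q (blockStart C c.castSucc) ∈ gap p c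

theorem splits_self {p : Fin (n + 1) → α} (hp : StrictMono p) (hC : C ≠ univ) : Splits C p p := by
  obtain ⟨k, hk⟩ : ∃ k, k ∉ C := by simpa [eq_univ_iff_forall] using hC
  obtain ⟨c, hc, hck, hgap⟩ := exists_mem_gap le_rfl (hp (blockStart_succ_lt hk))
  exact ⟨c, hc, hck ▸ hgap⟩

open Classical in
theorem card_filter_splits_le {ι : Type*} {S : Finset ι} {p : ι → Fin (n + 1) → α}
    {q : Fin (n + 1) → α} {D : ℕ} (hD : ∀ c ∉ C, ∀ y, #{a ∈ S | y ∈ gap (p a) c} ≤ D) :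
    #{a ∈ S | Splits C q (p a)} ≤ #Cᶜ * D := by
  have hsub : ({a ∈ S | Splits C q (p a)} : Finset ι) ⊆
      Cᶜ.biUnion fun c => {a ∈ S | q (blockStart C c.castSucc) ∈ gap (p a) c} := by
    intro a ha
    obtain ⟨haS, c, hc, hgap⟩ := mem_filter.1 ha
    exact mem_biUnion.2 ⟨c, mem_compl.2 hc, mem_filter.2 ⟨haS, hgap⟩⟩
  exact (card_le_card hsub).trans <|
    card_biUnion_le_card_mul _ _ _ fun c hc => hD c (mem_compl.1 hc) _

/-- The strict order on sequences in which `p` is below `q` if each block of `p` lies entirely below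
the corresponding block of `q`, except that this is reversed for the blocks starting at `c + 1` with
`c ∈ σ`. The first block is never reversed. -/
def BlockLT (C σ : Finset (Fin n)) (p q : Fin (n + 1) → α) : Prop :=
  ∀ i k, blockStart C i = blockStart C k →
    if blockStart C i ∈ σ.map (Fin.succEmb n) then q k < p i else p i < q k

instance : IsStrictOrder (Fin (n + 1) → α) (BlockLT C σ) where
  irrefl p h := by simpa using h 0 0 rfl
  trans p q s hpq hqs i k hik := by
    have h₁ := hpq i i rfl
    have h₂ := hqs i k hik
    split_ifs at h₁ h₂ ⊢
    · exact h₂.trans h₁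
    · exact h₁.trans h₂

theorem lt_of_not_splits {p q : Fin (n + 1) → α} (hq : Monotone q) (hne : ∀ i k, p i ≠ q k)
    (hqp : ¬ Splits C q p) (hik : blockStart C i = blockStart C k)
    (hstart : p (blockStart C i) < q (blockStart C i)) : p i < q k := by
  by_contra! hle
  have hlt : q (blockStart C i) < p i :=
    ((hq (hik ▸ blockStart_le)).trans hle).lt_of_ne (hne _ _).symm
  obtain ⟨c, hc, hci, hgap⟩ := exists_mem_gap hstart.le hlt
  exact hqp ⟨c, hc, hci ▸ hgap⟩

theorem exists_blockLT {p q : Fin (n + 1) → α} (hp : Monotone p) (hq : Monotone q)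
    (hne : ∀ i k, p i ≠ q k) (hpq : ¬ Splits C p q) (hqp : ¬ Splits C q p) :
    ∃ σ ∈ C.powerset, BlockLT C σ p q ∨ BlockLT C σ q p := by
  wlog h0 : p 0 < q 0 generalizing p q
  · obtain ⟨σ, hσ, h⟩ := this hq hp (fun i k => (hne k i).symm) hqp hpq
      ((not_lt.1 h0).lt_of_ne (hne 0 0).symm)
    exact ⟨σ, hσ, h.symm⟩
  let σ : Finset (Fin n) := {c ∈ C | q c.succ < p c.succ}
  refine ⟨σ, mem_powerset.2 (filter_subset _ _), .inl fun i k hik => ?_⟩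
  split_ifs with hi
  · obtain ⟨c, hc, hci⟩ := mem_map.1 hi
    have hstart : q (blockStart C k) < p (blockStart C k) := by
      rw [← hik, ← hci]
      exact (mem_filter.1 hc).2
    exact lt_of_not_splits hp (fun i k => (hne k i).symm) hpq hik.symm hstart
  · refine lt_of_not_splits hq hne hqp hik ((hne _ _).lt_or_gt.resolve_right fun hlt => ?_)
    rcases blockStart_eq_zero_or_succ C i with h | ⟨c, hc, h⟩
    · exact h0.not_gt (h ▸ hlt)
    · exact hi (h ▸ mem_map_of_mem _ (mem_filter.2 ⟨hc, h ▸ hlt⟩))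

end Blocks

section Cliques

variable {r n m : ℕ} {α ι : Type*} [LinearOrder α]

/-- `M` records the relative order of the entries of `p` and `q`: it is the pattern formed by `p`
and `q`, encoded as a relation. -/
def Interleaves (M : Fin r → Fin r → Prop) (p q : Fin r → α) : Prop :=
  ∀ i k, p i < q k ↔ M i k

/-- The pattern of two sequences which both have `x c` in their `c`-th gap for each `c ∈ C` and are
in the relation `BlockLT C σ`. -/
def blockPattern (C σ : Finset (Fin n)) (i k : Fin (n + 1)) : Prop :=
  blockStart C i < blockStart C k ∨
    blockStart C i = blockStart C k ∧ blockStart C i ∉ σ.map (Fin.succEmb n)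

theorem BlockLT.interleaves {C σ : Finset (Fin n)} {p q : Fin (n + 1) → α} {x : Fin n → α}
    (hp : Monotone p) (hq : Monotone q) (hpx : ∀ c ∈ C, x c ∈ gap p c)
    (hqx : ∀ c ∈ C, x c ∈ gap q c) (h : BlockLT C σ p q) :
    Interleaves (blockPattern C σ) p q := by
  intro i k
  rcases lt_trichotomy (blockStart C i) (blockStart C k) with hik | hik | hik
  · exact iff_of_true (lt_of_blockStart_lt hp hq hpx hqx hik) (.inl hik)
  · have := h i k hik
    split_ifs at this with hσ
    · exact iff_of_false this.not_gt (by simp [blockPattern, hik, hik ▸ hσ])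
    · exact iff_of_true this (.inr ⟨hik, hσ⟩)
  · exact iff_of_false (lt_of_blockStart_lt hq hp hqx hpx hik).not_gt
      (by simp [blockPattern, hik.not_gt, hik.ne'])

/-- The analogue of a `P`-clique for a family of sequences and a pattern `M` in the sense of
`Interleaves`. -/
def IsClique (M : Fin r → Fin r → Prop) (p : ι → Fin r → α) (Q : Set ι) : Prop :=
  Q.Pairwise fun a b => Interleaves M (p a) (p b) ∨ Interleaves M (p b) (p a)

variable {p : ι → Fin (n + 1) → α} {C : Finset (Fin n)} {x : Fin n → α}

theorem card_le_pow_of_pairwise_not_splits (hp : ∀ a, StrictMono (p a))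
    (hne : Pairwise fun a b => ∀ i k, p a i ≠ p b k)
    (hclique : ∀ M, M 0 0 → ∀ Q : Finset ι, IsClique M p Q → #Q ≤ m)
    {T : Finset ι} (hx : ∀ a ∈ T, ∀ c ∈ C, x c ∈ gap (p a) c)
    (hT : (T : Set ι).Pairwise fun a b => ¬ Splits C (p a) (p b)) :
    #T ≤ m ^ 2 ^ #C := by
  rw [← card_powerset]
  refine card_le_pow_of_chain_card_le (lt := fun σ => p ⁻¹'o BlockLT C σ) ?_ ?_
  · exact fun a ha b hb hab => exists_blockLT (hp a).monotone (hp b).monotone (hne hab)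
      (hT ha hb hab) (hT hb ha hab.symm)
  · intro σ _ Q hQT hQ
    have interleaves {a b : ι} (ha : a ∈ Q) (hb : b ∈ Q) (h : BlockLT C σ (p a) (p b)) :
        Interleaves (blockPattern C σ) (p a) (p b) :=
      h.interleaves (hp a).monotone (hp b).monotone (hx a (hQT ha)) (hx b (hQT hb))
    exact hclique (blockPattern C σ) (by simp [blockPattern]) Q fun a ha b hb hab =>
      (hQ ha hb hab).imp (interleaves ha hb) (interleaves hb ha)

open Classical in
theorem card_le_mul_of_card_mem_gap_le (hp : ∀ a, StrictMono (p a))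
    (hne : Pairwise fun a b => ∀ i k, p a i ≠ p b k)
    (hclique : ∀ M, M 0 0 → ∀ Q : Finset ι, IsClique M p Q → #Q ≤ m)
    (hC : C ≠ univ) {S : Finset ι} (hx : ∀ a ∈ S, ∀ c ∈ C, x c ∈ gap (p a) c) {D : ℕ}
    (hD : ∀ c ∉ C, ∀ y, #{a ∈ S | y ∈ gap (p a) c} ≤ D) :
    #S ≤ 2 * (#Cᶜ * D) * m ^ 2 ^ #C := by
  obtain ⟨T, hTS, hT, hST⟩ := exists_pairwise_not_card_le
    (R := fun a b => Splits C (p a) (p b)) (fun a _ => splits_self (hp a) hC)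
    fun _ _ => card_filter_splits_le hD
  have hTm : #T ≤ m ^ 2 ^ #C :=
    card_le_pow_of_pairwise_not_splits hp hne hclique (fun a ha => hx a (hTS ha)) hT
  exact hST.trans (Nat.mul_le_mul_left _ hTm)

theorem card_le_of_forall_mem_gap (hp : ∀ a, StrictMono (p a))
    (hne : Pairwise fun a b => ∀ i k, p a i ≠ p b k)
    (hclique : ∀ M, M 0 0 → ∀ Q : Finset ι, IsClique M p Q → #Q ≤ m)
    {t : ℕ} (ht : #C + t = n) {S : Finset ι} (hx : ∀ a ∈ S, ∀ c ∈ C, x c ∈ gap (p a) c) :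
    #S ≤ 2 ^ t * t.factorial * m ^ (2 ^ (n + 1) - 2 ^ #C) := by
  classical
  induction t generalizing C x S with
  | zero =>
    have hC : C = univ := by simpa using (card_eq_iff_eq_univ C).1 (by simpa using ht)
    have hexp : 2 ^ (n + 1) - 2 ^ n = 2 ^ n := by rw [pow_succ]; omega
    have := card_le_pow_of_pairwise_not_splits hp hne hclique hx fun a _ b _ _ => by
      simp [Splits, hC]
    simpa [hC, hexp] using this
  | succ t ih =>
    set D := 2 ^ t * t.factorial * m ^ (2 ^ (n + 1) - 2 ^ (#C + 1)) with hDef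
    have card_mem_gap_le : ∀ c ∉ C, ∀ y, #{a ∈ S | y ∈ gap (p a) c} ≤ D := by
      intro c hc y
      have hcard := card_insert_of_notMem hc
      rw [hDef, ← hcard]
      refine ih (x := Function.update x c y) (by omega) fun a ha => ?_
      obtain ⟨haS, hy⟩ := mem_filter.1 ha
      refine forall_mem_insert .. |>.2 ⟨by rwa [Function.update_self], fun c' hc' => ?_⟩
      rw [Function.update_of_ne (ne_of_mem_of_not_mem hc' hc)]
      exact hx a haS c' hc'
    have hcompl : #Cᶜ = t + 1 := by rw [card_compl, Fintype.card_fin]; omega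
    have hC : C ≠ univ := fun h => by simp [h] at hcompl
    have hexp : 2 ^ (n + 1) - 2 ^ #C = 2 ^ (n + 1) - 2 ^ (#C + 1) + 2 ^ #C := by
      have hle : 2 ^ (#C + 1) ≤ 2 ^ (n + 1) := Nat.pow_le_pow_right two_pos (by omega)
      have := pow_succ 2 #C
      omega
    calc #S ≤ 2 * ((t + 1) * D) * m ^ 2 ^ #C :=
          hcompl ▸ card_le_mul_of_card_mem_gap_le hp hne hclique hC hx card_mem_gap_le
      _ = 2 ^ (t + 1) * (t + 1).factorial * m ^ (2 ^ (n + 1) - 2 ^ #C) := by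
        rw [hexp, Nat.factorial_succ, pow_succ, pow_add]
        ring

theorem card_le_of_isClique_card_le [Fintype ι] (hp : ∀ a, StrictMono (p a))
    (hne : Pairwise fun a b => ∀ i k, p a i ≠ p b k)
    (hclique : ∀ M, M 0 0 → ∀ Q : Finset ι, IsClique M p Q → #Q ≤ m) :
    Fintype.card ι ≤ 2 ^ n * n.factorial * m ^ (2 ^ (n + 1) - 1) := by
  rcases isEmpty_or_nonempty ι with _ | ⟨⟨a⟩⟩
  · simp
  simpa using card_le_of_forall_mem_gap (C := ∅) (x := fun _ => p a 0) (S := univ) hp hne hclique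
    (by simp) (by simp)

end Cliques

section Patterns

variable {r m : ℕ}

theorem head?_patternOfPair {e f : Finset ℤ} (he : e.Nonempty) (hf : ∀ y ∈ f, ∃ x ∈ e, x < y) :
    (patternOfPair e f).head? = some true := by
  have hef : (e ∪ f).Nonempty := he.mono subset_union_left
  have head_sort : (e ∪ f).sort.head? = some ((e ∪ f).min' hef) := by
    rw [List.head?_eq_getElem?, List.getElem?_eq_getElem (by simpa using hef),
      sorted_zero_eq_min']
  have hmin : (e ∪ f).min' hef ∈ e := by
    refine (mem_union.1 (min'_mem _ hef)).resolve_right fun h => ?_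
    obtain ⟨x, hx, hlt⟩ := hf _ h
    exact (min'_le _ x (mem_union_left f hx)).not_gt hlt
  simp [patternOfPair, head_sort, hmin]

theorem count_true_patternOfPair (e f : Finset ℤ) : (patternOfPair e f).count true = #e := by
  have filter_mem : {x ∈ e ∪ f | x ∈ e} = e := by
    rw [filter_mem_eq_inter, inter_eq_right.2 subset_union_left]
  calc (patternOfPair e f).count true = (e ∪ f).1.countP (· ∈ e) := by
        rw [patternOfPair, List.count, List.countP_map, ← sort_eq (e ∪ f) (· ≤ ·),
          Multiset.coe_countP]
        simp [Function.comp_def]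
    _ = #e := by rw [Multiset.countP_eq_card_filter, ← filter_val, filter_mem, card_val]

theorem isPattern_patternOfPair {e f : Finset ℤ} (he : #e = r) (hf : #f = r) (hef : Disjoint e f)
    (hne : e.Nonempty) (hlt : ∀ y ∈ f, ∃ x ∈ e, x < y) : IsPattern r (patternOfPair e f) :=
  ⟨by simp [patternOfPair, card_union_of_disjoint hef, he, hf, two_mul],
    he ▸ count_true_patternOfPair e f, head?_patternOfPair hne hlt⟩

theorem patternOfPair_eq_map_isLeft {κ κ' : Type*} [Fintype κ] [Fintype κ'] {u : κ → ℤ}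
    {v : κ' → ℤ} (huv : Function.Injective (Sum.elim u v)) (le : κ ⊕ κ' → κ ⊕ κ' → Prop)
    [DecidableRel le] [IsTrans _ le] [Std.Antisymm le] [Std.Total le]
    (hle : ∀ a b, le a b ↔ Sum.elim u v a ≤ Sum.elim u v b) :
    patternOfPair (univ.image u) (univ.image v) = (univ.sort le).map Sum.isLeft := by
  have union_eq : univ.image u ∪ univ.image v = univ.map ⟨Sum.elim u v, huv⟩ := by
    ext x
    simp
  rw [patternOfPair, union_eq, ← map_sort (r := le) _ _ _ fun a _ b _ => hle a b, List.map_map]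
  refine List.map_congr_left fun a _ => ?_
  rcases a with i | k
  · simp
  · have hne (i : κ) : u i ≠ v k := huv.ne Sum.inl_ne_inr
    simp [hne]

theorem patternOfPair_congr {M : Fin r → Fin r → Prop} {u v u' v' : Fin r → ℤ}
    (hu : StrictMono u) (hv : StrictMono v) (hu' : StrictMono u') (hv' : StrictMono v')
    (huv : ∀ i k, u i ≠ v k) (huv' : ∀ i k, u' i ≠ v' k) (h : Interleaves M u v)
    (h' : Interleaves M u' v') :
    patternOfPair (univ.image u) (univ.image v) =
      patternOfPair (univ.image u') (univ.image v') := by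
  have hinj := hu.injective.sumElim hv.injective huv
  have hinj' := hu'.injective.sumElim hv'.injective huv'
  classical
  let le : Fin r ⊕ Fin r → Fin r ⊕ Fin r → Prop := Sum.elim u v ⁻¹'o (· ≤ ·)
  have : IsTrans _ le := Order.Preimage.instIsTrans
  have : Std.Antisymm le := ⟨fun _ _ hab hba => hinj (le_antisymm hab hba)⟩
  have : Std.Total le := ⟨fun _ _ => le_total _ _⟩
  rw [patternOfPair_eq_map_isLeft hinj le fun _ _ => Iff.rfl,
    patternOfPair_eq_map_isLeft hinj' le]
  have huv_iff (i k) : u i < v k ↔ u' i < v' k := (h i k).trans (h' i k).symm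
  rintro (i | i) (k | k)
  · exact hu.le_iff_le.trans hu'.le_iff_le.symm
  · simpa [le, Order.Preimage, (huv i k).le_iff_lt, (huv' i k).le_iff_lt] using huv_iff i k
  · simpa [le, Order.Preimage] using (huv_iff k i).not
  · exact hv.le_iff_le.trans hv'.le_iff_le.symm

/-- The increasing enumeration of a member of a family of `r`-element sets. -/
noncomputable def enum {H : Finset (Finset ℤ)} (hcard : ∀ e ∈ H, #e = r) (e : H) : Fin r ↪o ℤ :=
  e.1.orderEmbOfFin (hcard e e.2)

variable {H : Finset (Finset ℤ)} {hcard : ∀ e ∈ H, #e = r}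

theorem image_enum (e : H) : univ.image (enum hcard e) = e :=
  image_orderEmbOfFin_univ _ _

theorem enum_ne_enum (hdisj : ∀ e ∈ H, ∀ f ∈ H, e ≠ f → Disjoint e f) :
    Pairwise fun e f : H => ∀ i k, enum hcard e i ≠ enum hcard f k := fun e f hef _ _ =>
  disjoint_iff_ne.1 (hdisj e e.2 f f.2 (Subtype.coe_ne_coe.2 hef)) _ (orderEmbOfFin_mem ..) _
    (orderEmbOfFin_mem ..)

theorem isPattern_patternOfPair_of_enum_lt [NeZero r] {e f : H} (hef : Disjoint e.1 f.1)
    (h : enum hcard e 0 < enum hcard f 0) : IsPattern r (patternOfPair e f) := by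
  have he : enum hcard e 0 ∈ e.1 := orderEmbOfFin_mem ..
  refine isPattern_patternOfPair (hcard e e.2) (hcard f f.2) hef ⟨_, he⟩ fun y hy => ⟨_, he, ?_⟩
  rw [← image_enum (hcard := hcard) f] at hy
  obtain ⟨k, -, rfl⟩ := mem_image.1 hy
  exact h.trans_le ((enum hcard f).monotone (Fin.zero_le k))

theorem card_le_of_isClique_enum [NeZero r] (hm : 1 ≤ m)
    (hdisj : ∀ e ∈ H, ∀ f ∈ H, e ≠ f → Disjoint e f)
    (hclique : ∀ P, IsPattern r P → ∀ S ⊆ H, IsPClique P S → #S ≤ m)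
    {M : Fin r → Fin r → Prop} (hM : M 0 0) {Q : Finset H}
    (hQ : IsClique M (fun e => enum hcard e) (Q : Set H)) : #Q ≤ m := by
  have hne := enum_ne_enum (hcard := hcard) hdisj
  by_cases hpair : ∃ e f, e ≠ f ∧ Interleaves M (enum hcard e) (enum hcard f)
  · obtain ⟨e, f, hef, heM⟩ := hpair
    have patternOfPair_eq {a b : H} (hab : a ≠ b)
        (h : Interleaves M (enum hcard a) (enum hcard b)) :
        patternOfPair a b = patternOfPair e f := by
      simpa only [image_enum] using patternOfPair_congr (enum hcard a).strictMono
        (enum hcard b).strictMono (enum hcard e).strictMono (enum hcard f).strictMono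
        (hne hab) (hne hef) h heM
    have hP : IsPattern r (patternOfPair e f) := isPattern_patternOfPair_of_enum_lt
      (hdisj e e.2 f f.2 (Subtype.coe_ne_coe.2 hef)) ((heM 0 0).2 hM)
    rw [← card_map (Function.Embedding.subtype _)]
    refine hclique _ hP _ (map_subtype_subset Q) ?_
    simp only [IsPClique, forall_mem_map]
    intro a ha b hb hab
    have hab : a ≠ b := Subtype.coe_ne_coe.1 hab
    exact (hQ ha hb hab).imp (patternOfPair_eq hab) (patternOfPair_eq hab.symm)
  · push Not at hpair
    refine (card_le_one.2 fun a ha b hb => ?_).trans hm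
    by_contra hab
    rcases hQ ha hb hab with h | h
    · exact hpair a b hab h
    · exact hpair b a (Ne.symm hab) h

end Patterns

end OrderedMatching

/-- **Main upper bound.** If every `P`-clique of a collection `H` of `n` pairwise disjoint
`r`-element subsets of `ℤ` has size at most `m` (for every `r`-pattern `P`), then
`n ≤ 2^(r-1) · (r-1)! · m^(2^r - 1)`. -/
theorem ordered_matching_ramsey_upper (r m : ℕ) (hr : 2 ≤ r) (hm : 1 ≤ m)
    (H : Finset (Finset ℤ))
    (hcard : ∀ e ∈ H, e.card = r)
    (hdisj : ∀ e ∈ H, ∀ f ∈ H, e ≠ f → Disjoint e f)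
    (hclique : ∀ P : List Bool, IsPattern r P → ∀ S ⊆ H, IsPClique P S → S.card ≤ m) :
    H.card ≤ 2 ^ (r - 1) * Nat.factorial (r - 1) * m ^ (2 ^ r - 1) := by
  obtain ⟨n, rfl⟩ : ∃ n, r = n + 1 := ⟨r - 1, by omega⟩
  simpa using OrderedMatching.card_le_of_isClique_card_le
    (fun e : H => (OrderedMatching.enum hcard e).strictMono)
    (OrderedMatching.enum_ne_enum hdisj)
    (fun _ hM _ hQ => OrderedMatching.card_le_of_isClique_enum hm hdisj hclique hM hQ)
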